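/- Let the notation be as in the context, with two splicing data (superscripts 1 and 2), the splicing map D, and the quantities k•^i and l•^i defined for each datum. Then dim ker(D) ≥ k0^1·k0^2 + kinf^1·k1^2 + k1^1·kinf^2 + linf^1·l0^2 + l0^1·linf^2 + l1^1·l1^2. -/

import Mathlib

set_option maxHeartbeats 1600000

open Matrix Module
open scoped Kronecker

abbrev F2 : Type := ZMod 2

/-- A splicing datum: the algebraic data extracted from the knot Floer homology of a knot
in a homology sphere, as in Eftekhary's splicing formula. -/
structure SplicingDatum where
  a0 : ℕ
  a1 : ℕ
  ainf : ℕ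
  A0 : Matrix (Fin ainf) (Fin ainf) F2
  B0 : Matrix (Fin ainf) (Fin a1) F2
  C0 : Matrix (Fin a1) (Fin ainf) F2
  D0 : Matrix (Fin a1) (Fin a1) F2
  A1 : Matrix (Fin a0) (Fin a0) F2
  B1 : Matrix (Fin a0) (Fin ainf) F2
  C1 : Matrix (Fin ainf) (Fin a0) F2
  D1 : Matrix (Fin ainf) (Fin ainf) F2
  Ainf : Matrix (Fin a1) (Fin a1) F2
  Binf : Matrix (Fin a1) (Fin a0) F2
  Cinf : Matrix (Fin a0) (Fin a1) F2
  Dinf : Matrix (Fin a0) (Fin a0) F2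
  C0inv : Matrix (Fin a1) (Fin ainf) F2
  C1inv : Matrix (Fin ainf) (Fin a0) F2
  Cinfinv : Matrix (Fin a0) (Fin a1) F2
  inv0_left : Matrix.fromBlocks A0 B0 C0 D0 * Matrix.fromBlocks A0 B0 C0inv D0 = 1
  inv0_right : Matrix.fromBlocks A0 B0 C0inv D0 * Matrix.fromBlocks A0 B0 C0 D0 = 1
  inv1_left : Matrix.fromBlocks A1 B1 C1 D1 * Matrix.fromBlocks A1 B1 C1inv D1 = 1
  inv1_right : Matrix.fromBlocks A1 B1 C1inv D1 * Matrix.fromBlocks A1 B1 C1 D1 = 1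
  invinf_left : Matrix.fromBlocks Ainf Binf Cinf Dinf * Matrix.fromBlocks Ainf Binf Cinfinv Dinf = 1
  invinf_right : Matrix.fromBlocks Ainf Binf Cinfinv Dinf * Matrix.fromBlocks Ainf Binf Cinf Dinf = 1
  comm0 : A0 * B0 + B0 * D0 = 0
  comm1 : A1 * B1 + B1 * D1 = 0
  comminf : Ainf * Binf + Binf * Dinf = 0
  sq0 : B1 * B0 * Binf * (B1 * B0 * Binf) = 0
  sq1 : Binf * B1 * B0 * (Binf * B1 * B0) = 0
  sqinf : B0 * Binf * B1 * (B0 * Binf * B1) = 0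

/-- dimension of the kernel of the linear map induced by a matrix -/
noncomputable def kdim {m n : Type*} [Fintype n] (M : Matrix m n F2) : ℕ :=
  finrank F2 ↥(LinearMap.ker M.mulVecLin)

/-- dimension of the cokernel of the linear map induced by a matrix -/
noncomputable def cdim {m n : Type*} [Fintype n] (M : Matrix m n F2) : ℕ :=
  finrank F2 ((m → F2) ⧸ LinearMap.range M.mulVecLin)

/-- tensor product of two vectors, as a vector indexed by the product type -/
def tensVec {m n : Type*} (x : m → F2) (y : n → F2) : m × n → F2 :=
  fun p => x p.1 * y p.2

namespace SplicingDatum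

variable (d : SplicingDatum)

def X0M : Matrix (Fin d.a0) (Fin d.a0) F2 := d.B1 * d.B0 * d.Binf
def X1M : Matrix (Fin d.a1) (Fin d.a1) F2 := d.Binf * d.B1 * d.B0
def XinfM : Matrix (Fin d.ainf) (Fin d.ainf) F2 := d.B0 * d.Binf * d.B1

def tau0 : Matrix (Fin d.ainf ⊕ Fin d.a1) (Fin d.ainf ⊕ Fin d.a1) F2 :=
  Matrix.fromBlocks d.A0 d.B0 d.C0 d.D0
def tau0inv : Matrix (Fin d.ainf ⊕ Fin d.a1) (Fin d.ainf ⊕ Fin d.a1) F2 :=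
  Matrix.fromBlocks d.A0 d.B0 d.C0inv d.D0
def tau1 : Matrix (Fin d.a0 ⊕ Fin d.ainf) (Fin d.a0 ⊕ Fin d.ainf) F2 :=
  Matrix.fromBlocks d.A1 d.B1 d.C1 d.D1
def tau1inv : Matrix (Fin d.a0 ⊕ Fin d.ainf) (Fin d.a0 ⊕ Fin d.ainf) F2 :=
  Matrix.fromBlocks d.A1 d.B1 d.C1inv d.D1
def tauinf : Matrix (Fin d.a1 ⊕ Fin d.a0) (Fin d.a1 ⊕ Fin d.a0) F2 :=
  Matrix.fromBlocks d.Ainf d.Binf d.Cinf d.Dinf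
def tauinfinv : Matrix (Fin d.a1 ⊕ Fin d.a0) (Fin d.a1 ⊕ Fin d.a0) F2 :=
  Matrix.fromBlocks d.Ainf d.Binf d.Cinfinv d.Dinf

/-- the map `finf : F^{ainf+a1} → F^{a0+ainf}` -/
def finfM : Matrix (Fin d.a0 ⊕ Fin d.ainf) (Fin d.ainf ⊕ Fin d.a1) F2 :=
  Matrix.fromBlocks 0 0 (1 : Matrix (Fin d.ainf) (Fin d.ainf) F2) 0
/-- the map `f0 : F^{a0+ainf} → F^{a1+a0}` -/
def f0M : Matrix (Fin d.a1 ⊕ Fin d.a0) (Fin d.a0 ⊕ Fin d.ainf) F2 :=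
  Matrix.fromBlocks 0 0 (1 : Matrix (Fin d.a0) (Fin d.a0) F2) 0
/-- the map `f1 : F^{a1+a0} → F^{ainf+a1}` -/
def f1M : Matrix (Fin d.ainf ⊕ Fin d.a1) (Fin d.a1 ⊕ Fin d.a0) F2 :=
  Matrix.fromBlocks 0 0 (1 : Matrix (Fin d.a1) (Fin d.a1) F2) 0

def fbarinfM : Matrix (Fin d.a0 ⊕ Fin d.ainf) (Fin d.ainf ⊕ Fin d.a1) F2 :=
  d.tau1inv * d.finfM * d.tau0
def fbar0M : Matrix (Fin d.a1 ⊕ Fin d.a0) (Fin d.a0 ⊕ Fin d.ainf) F2 :=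
  d.tauinfinv * d.f0M * d.tau1
def fbar1M : Matrix (Fin d.ainf ⊕ Fin d.a1) (Fin d.a1 ⊕ Fin d.a0) F2 :=
  d.tau0inv * d.f1M * d.tauinf

noncomputable def r0 : ℕ := d.B0.rank
noncomputable def r1 : ℕ := d.B1.rank
noncomputable def rinf : ℕ := d.Binf.rank

noncomputable def k0 : ℕ :=
  finrank F2 ↥(LinearMap.ker d.f0M.mulVecLin ⊓ LinearMap.ker d.fbar0M.mulVecLin)
noncomputable def k1 : ℕ :=
  finrank F2 ↥(LinearMap.ker d.f1M.mulVecLin ⊓ LinearMap.ker d.fbar1M.mulVecLin)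
noncomputable def kinf : ℕ :=
  finrank F2 ↥(LinearMap.ker d.finfM.mulVecLin ⊓ LinearMap.ker d.fbarinfM.mulVecLin)

noncomputable def l0 : ℕ :=
  finrank F2 ↥(LinearMap.ker (d.f0M + d.fbar0M).mulVecLin) - d.k0
noncomputable def l1 : ℕ :=
  finrank F2 ↥(LinearMap.ker (d.f1M + d.fbar1M).mulVecLin) - d.k1
noncomputable def linf : ℕ :=
  finrank F2 ↥(LinearMap.ker (d.finfM + d.fbarinfM).mulVecLin) - d.kinf

noncomputable def c0 : ℕ :=
  finrank F2 ((Fin d.a1 ⊕ Fin d.a0 → F2) ⧸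
    (LinearMap.range d.f0M.mulVecLin ⊔ LinearMap.range d.fbar0M.mulVecLin))
noncomputable def c1 : ℕ :=
  finrank F2 ((Fin d.ainf ⊕ Fin d.a1 → F2) ⧸
    (LinearMap.range d.f1M.mulVecLin ⊔ LinearMap.range d.fbar1M.mulVecLin))
noncomputable def cinf : ℕ :=
  finrank F2 ((Fin d.a0 ⊕ Fin d.ainf → F2) ⧸
    (LinearMap.range d.finfM.mulVecLin ⊔ LinearMap.range d.fbarinfM.mulVecLin))

noncomputable def dd0 : ℕ :=
  finrank F2 ↥(LinearMap.range d.f0M.mulVecLin ⊔ LinearMap.range d.fbar0M.mulVecLin) -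
    finrank F2 ↥(LinearMap.range (d.f0M + d.fbar0M).mulVecLin)
noncomputable def dd1 : ℕ :=
  finrank F2 ↥(LinearMap.range d.f1M.mulVecLin ⊔ LinearMap.range d.fbar1M.mulVecLin) -
    finrank F2 ↥(LinearMap.range (d.f1M + d.fbar1M).mulVecLin)
noncomputable def ddinf : ℕ :=
  finrank F2 ↥(LinearMap.range d.finfM.mulVecLin ⊔ LinearMap.range d.fbarinfM.mulVecLin) -
    finrank F2 ↥(LinearMap.range (d.finfM + d.fbarinfM).mulVecLin)

noncomputable def delta0 : ℕ := d.a0 - d.rinf - d.l0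
noncomputable def delta1 : ℕ := d.a1 - d.r0 - d.l1
noncomputable def deltainf : ℕ := d.ainf - d.r1 - d.linf

end SplicingDatum

namespace SplicingDatum

/-- Index type of the source of the splicing map `D`. -/
abbrev Src (e1 e2 : SplicingDatum) : Type :=
  (Fin e1.ainf × Fin e2.ainf) ⊕ (Fin e1.ainf × Fin e2.a0) ⊕ (Fin e1.a1 × Fin e2.a0) ⊕
    (Fin e1.a0 × Fin e2.ainf) ⊕ (Fin e1.a0 × Fin e2.a1) ⊕ (Fin e1.a1 × Fin e2.a1)

/-- Index type of the target of the splicing map `D`. -/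
abbrev Tgt (e1 e2 : SplicingDatum) : Type :=
  (Fin e1.a0 × Fin e2.a0) ⊕ (Fin e1.ainf × Fin e2.a1) ⊕ (Fin e1.ainf × Fin e2.a0) ⊕
    (Fin e1.a1 × Fin e2.ainf) ⊕ (Fin e1.a0 × Fin e2.ainf) ⊕ (Fin e1.a1 × Fin e2.a1)

def row1 (e1 e2 : SplicingDatum) : Matrix (Fin e1.a0 × Fin e2.a0) (Src e1 e2) F2 :=
  Matrix.fromCols ((e1.Dinf * e1.B1) ⊗ₖ (e2.B1 * e2.A0)) <|
  Matrix.fromCols ((e1.B1 * e1.A0) ⊗ₖ (1 : Matrix (Fin e2.a0) (Fin e2.a0) F2)) <|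
  Matrix.fromCols ((e1.B1 * e1.B0) ⊗ₖ (1 : Matrix (Fin e2.a0) (Fin e2.a0) F2)) <|
  Matrix.fromCols ((e1.Dinf * e1.A1) ⊗ₖ (e2.B1 * e2.A0)) <|
  Matrix.fromCols ((1 : Matrix (Fin e1.a0) (Fin e1.a0) F2) ⊗ₖ (e2.B1 * e2.B0)) 0

def row2 (e1 e2 : SplicingDatum) : Matrix (Fin e1.ainf × Fin e2.a1) (Src e1 e2) F2 :=
  Matrix.fromCols ((1 : Matrix (Fin e1.ainf) (Fin e1.ainf) F2) ⊗ₖ (e2.Binf * e2.B1)) <|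
  Matrix.fromCols ((e1.D1 * e1.A0) ⊗ₖ (e2.Binf * e2.A1)) <|
  Matrix.fromCols ((e1.D1 * e1.B0) ⊗ₖ (e2.Binf * e2.A1)) <|
  Matrix.fromCols 0 <|
  Matrix.fromCols ((e1.B0 * e1.Binf) ⊗ₖ (1 : Matrix (Fin e2.a1) (Fin e2.a1) F2))
    ((e1.B0 * e1.Ainf) ⊗ₖ (1 : Matrix (Fin e2.a1) (Fin e2.a1) F2))

def row3 (e1 e2 : SplicingDatum) : Matrix (Fin e1.ainf × Fin e2.a0) (Src e1 e2) F2 :=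
  Matrix.fromCols ((1 : Matrix (Fin e1.ainf) (Fin e1.ainf) F2) ⊗ₖ (e2.Dinf * e2.B1)) <|
  Matrix.fromCols
    ((1 : Matrix (Fin e1.ainf) (Fin e1.ainf) F2) ⊗ₖ (1 : Matrix (Fin e2.a0) (Fin e2.a0) F2) +
      (e1.D1 * e1.A0) ⊗ₖ (e2.Dinf * e2.A1)) <|
  Matrix.fromCols ((e1.D1 * e1.B0) ⊗ₖ (e2.Dinf * e2.A1)) <|
  Matrix.fromCols 0 <|
  Matrix.fromCols 0 0

def row4 (e1 e2 : SplicingDatum) : Matrix (Fin e1.a1 × Fin e2.ainf) (Src e1 e2) F2 :=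
  Matrix.fromCols ((e1.Binf * e1.B1) ⊗ₖ (1 : Matrix (Fin e2.ainf) (Fin e2.ainf) F2)) <|
  Matrix.fromCols 0 <|
  Matrix.fromCols ((1 : Matrix (Fin e1.a1) (Fin e1.a1) F2) ⊗ₖ (e2.B0 * e2.Binf)) <|
  Matrix.fromCols ((e1.Binf * e1.A1) ⊗ₖ (1 : Matrix (Fin e2.ainf) (Fin e2.ainf) F2)) <|
  Matrix.fromCols
    ((e1.D0 * e1.Binf) ⊗ₖ (e2.B0 * e2.Ainf) + (e1.X1M * e1.Binf) ⊗ₖ (e2.B0 * e2.X1M))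
    ((e1.D0 * e1.Ainf) ⊗ₖ (e2.B0 * e2.Ainf) + (e1.X1M * e1.Ainf) ⊗ₖ (e2.B0 * e2.X1M))

def row5 (e1 e2 : SplicingDatum) : Matrix (Fin e1.a0 × Fin e2.ainf) (Src e1 e2) F2 :=
  Matrix.fromCols ((e1.Dinf * e1.B1) ⊗ₖ (e2.D1 * e2.A0)) <|
  Matrix.fromCols 0 <|
  Matrix.fromCols 0 <|
  Matrix.fromCols
    ((1 : Matrix (Fin e1.a0) (Fin e1.a0) F2) ⊗ₖ (1 : Matrix (Fin e2.ainf) (Fin e2.ainf) F2) +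
      (e1.Dinf * e1.A1) ⊗ₖ (e2.D1 * e2.A0)) <|
  Matrix.fromCols ((1 : Matrix (Fin e1.a0) (Fin e1.a0) F2) ⊗ₖ (e2.D1 * e2.B0)) 0

def row6 (e1 e2 : SplicingDatum) : Matrix (Fin e1.a1 × Fin e2.a1) (Src e1 e2) F2 :=
  Matrix.fromCols 0 <|
  Matrix.fromCols 0 <|
  Matrix.fromCols ((1 : Matrix (Fin e1.a1) (Fin e1.a1) F2) ⊗ₖ (e2.D0 * e2.Binf)) <|
  Matrix.fromCols 0 <|
  Matrix.fromCols
    ((e1.D0 * e1.Binf) ⊗ₖ (e2.D0 * e2.Ainf) + (e1.X1M * e1.Binf) ⊗ₖ (e2.D0 * e2.X1M))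
    ((1 : Matrix (Fin e1.a1) (Fin e1.a1) F2) ⊗ₖ (1 : Matrix (Fin e2.a1) (Fin e2.a1) F2) +
      (e1.D0 * e1.Ainf) ⊗ₖ (e2.D0 * e2.Ainf) + (e1.X1M * e1.Ainf) ⊗ₖ (e2.D0 * e2.X1M))

/-- The splicing map `D = D(K1, K2)` as a `6 × 6` block matrix. -/
def spliceD (e1 e2 : SplicingDatum) : Matrix (Tgt e1 e2) (Src e1 e2) F2 :=
  Matrix.fromRows (row1 e1 e2) <| Matrix.fromRows (row2 e1 e2) <|
  Matrix.fromRows (row3 e1 e2) <| Matrix.fromRows (row4 e1 e2) <|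
  Matrix.fromRows (row5 e1 e2) (row6 e1 e2)

end SplicingDatum

/-!
Order the summands of the source of `D` from first to sixth. The kernel elements supported in the
odd summands contain `ker B1 ⊗ ker B1`, `ker B0 ⊗ ker Binf` and `ker Binf ⊗ ker B0`, whose
dimensions are products of the `k`'s, because `k0`, `k1`, `kinf` are the nullities of `B1`, `Binf`,
`B0`. The first block of a vector in `ker (finf + fbarinf)` ranges over a space `Linf` of dimension
`linf`, with analogues `L0` and `L1`. The projection of `ker D` to the even summands contains
`Linf ⊗ L0`, `L0 ⊗ Linf` and `L1 ⊗ L1`: the second blocks of the vectors being tensored tell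
how to fill in the odd summands. Rank-nullity for this projection, restricted to `ker D`, adds the
two contributions.
-/

section LinearAlgebra

variable {K V W U : Type*} [AddCommGroup V] [AddCommGroup W] [AddCommGroup U]

section DivisionRing

variable [DivisionRing K] [Module K V] [Module K W] [Module K U]

theorem finrank_map_add_finrank_inf_ker [FiniteDimensional K V] (f : V →ₗ[K] W)
    (S : Submodule K V) :
    finrank K (S.map f) + finrank K ↥(S ⊓ LinearMap.ker f) = finrank K S := by
  have hker : finrank K ↥(S ⊓ LinearMap.ker f) = finrank K (LinearMap.ker (f.domRestrict S)) := by
    rw [← Submodule.finrank_map_subtype_eq, LinearMap.ker_domRestrict,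
      Submodule.map_comap_subtype]
  rw [hker, ← LinearMap.range_domRestrict, LinearMap.finrank_range_add_finrank_ker]

theorem finrank_submodule_prod [FiniteDimensional K V] [FiniteDimensional K W]
    (S : Submodule K V) (T : Submodule K W) :
    finrank K ↥(S.prod T) = finrank K S + finrank K T := by
  have hinj : Function.Injective (S.subtype.prodMap T.subtype) :=
    S.subtype_injective.prodMap T.subtype_injective
  rw [← Module.finrank_prod, ← LinearMap.finrank_range_of_inj hinj, LinearMap.range_prodMap,
    S.range_subtype, T.range_subtype]

theorem finrank_add_finrank_le_of_comp_eq_zero [FiniteDimensional K V] {i : U →ₗ[K] V}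
    {f : V →ₗ[K] W} (hi : Function.Injective i) (hfi : f ∘ₗ i = 0) {N : Submodule K V}
    {S : Submodule K U} {T : Submodule K W} (hS : S ≤ N.comap i) (hT : T ≤ N.map f) :
    finrank K S + finrank K T ≤ finrank K N := by
  have hSker : S.map i ≤ N ⊓ LinearMap.ker f :=
    le_inf (Submodule.map_le_iff_le_comap.2 hS) <| Submodule.map_le_iff_le_comap.2 fun x _ => by
      simpa using LinearMap.congr_fun hfi x
  calc finrank K S + finrank K T
      = finrank K (S.map i) + finrank K T := by
        rw [(Submodule.equivMapOfInjective i hi S).finrank_eq]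
    _ ≤ finrank K ↥(N ⊓ LinearMap.ker f) + finrank K (N.map f) :=
        add_le_add (Submodule.finrank_mono hSker) (Submodule.finrank_mono hT)
    _ = finrank K N := by rw [add_comm, finrank_map_add_finrank_inf_ker]

end DivisionRing

theorem finrank_map₂_of_injective_lift [Field K] [Module K V] [Module K W] [Module K U]
    (b : V →ₗ[K] W →ₗ[K] U)
    (hb : Function.Injective (TensorProduct.lift b)) (S : Submodule K V) (T : Submodule K W) :
    finrank K (Submodule.map₂ b S T) = finrank K S * finrank K T := by
  have hST : Function.Injective (TensorProduct.mapIncl S T) :=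
    TensorProduct.map_injective_of_flat_flat _ _ S.subtype_injective T.subtype_injective
  have hlift : Function.Injective (TensorProduct.lift b ∘ₗ TensorProduct.mapIncl S T) :=
    hb.comp hST
  rw [TensorProduct.map₂_eq_range_lift_comp_mapIncl,
    LinearMap.finrank_range_of_inj hlift, finrank_tensorProduct]

end LinearAlgebra

section TensVec

variable {m n p q : Type*}

theorem tensVec_zero_left (y : n → F2) : tensVec (0 : m → F2) y = 0 := by
  ext; simp [tensVec]

theorem tensVec_zero_right (x : m → F2) : tensVec x (0 : n → F2) = 0 := by
  ext; simp [tensVec]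

theorem tensVec_add_left (x x' : m → F2) (y : n → F2) :
    tensVec (x + x') y = tensVec x y + tensVec x' y := by
  ext; simp [tensVec, add_mul]

theorem tensVec_add_right (x : m → F2) (y y' : n → F2) :
    tensVec x (y + y') = tensVec x y + tensVec x y' := by
  ext; simp [tensVec, mul_add]

theorem kronecker_mulVec_tensVec [Fintype m] [Fintype n] (A : Matrix p m F2) (B : Matrix q n F2)
    (x : m → F2) (y : n → F2) :
    (A ⊗ₖ B) *ᵥ tensVec x y = tensVec (A *ᵥ x) (B *ᵥ y) := by
  ext ⟨i, j⟩
  simp only [tensVec, Matrix.mulVec, dotProduct, Matrix.kroneckerMap_apply, Fintype.sum_prod_type,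
    Finset.sum_mul_sum, mul_mul_mul_comm]

/-- The tensor product of vectors as a bilinear map; `Submodule.map₂ tensBilin S T` is the
subspace `S ⊗ T` of `F^m ⊗ F^n = F^(m × n)`. -/
def tensBilin : (m → F2) →ₗ[F2] (n → F2) →ₗ[F2] (m × n → F2) :=
  LinearMap.mk₂ F2 tensVec tensVec_add_left (fun c x y => by ext; simp [tensVec, mul_assoc])
    tensVec_add_right (fun c x y => by ext; simp [tensVec, mul_left_comm])

theorem lift_tensBilin_injective [Finite m] [Finite n] :
    Function.Injective (TensorProduct.lift (tensBilin : (m → F2) →ₗ[F2] (n → F2) →ₗ[F2] _)) := by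
  classical
  let b := (Pi.basisFun F2 m).tensorProduct (Pi.basisFun F2 n)
  have hb : TensorProduct.lift tensBilin =
      (b.equiv (Pi.basisFun F2 (m × n)) (.refl _)).toLinearMap := by
    refine b.ext fun ⟨i, j⟩ => ?_
    rw [LinearEquiv.coe_coe, Basis.equiv_apply]
    ext ⟨k, l⟩
    simp [b, tensBilin, tensVec, Pi.single_apply, ← ite_and, and_comm]
  rw [hb]
  exact LinearEquiv.injective _

theorem finrank_map₂_tensBilin [Finite m] [Finite n] (S : Submodule F2 (m → F2))
    (T : Submodule F2 (n → F2)) :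
    finrank F2 (Submodule.map₂ tensBilin S T) = finrank F2 S * finrank F2 T :=
  finrank_map₂_of_injective_lift _ lift_tensBilin_injective S T

end TensVec

namespace SplicingDatum

section Datum

variable (e : SplicingDatum)

/-- The datum with its three indices cyclically permuted: the data at `0`, `1`, `inf` of `e.rotate`
are those at `1`, `inf`, `0` of `e`. Statements about `k0`, `k1` and `l0`, `l1` are obtained from
those about `kinf` and `linf` by rotating. -/
abbrev rotate : SplicingDatum where
  a0 := e.a1
  a1 := e.ainf
  ainf := e.a0
  A0 := e.A1
  B0 := e.B1
  C0 := e.C1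
  D0 := e.D1
  A1 := e.Ainf
  B1 := e.Binf
  C1 := e.Cinf
  D1 := e.Dinf
  Ainf := e.A0
  Binf := e.B0
  Cinf := e.C0
  Dinf := e.D0
  C0inv := e.C1inv
  C1inv := e.Cinfinv
  Cinfinv := e.C0inv
  inv0_left := e.inv1_left
  inv0_right := e.inv1_right
  inv1_left := e.invinf_left
  inv1_right := e.invinf_right
  invinf_left := e.inv0_left
  invinf_right := e.inv0_right
  comm0 := e.comm1
  comm1 := e.comminf
  comminf := e.comm0
  sq0 := e.sq1
  sq1 := e.sqinf
  sqinf := e.sq0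

variable {e}

theorem B1_mulVec_D1_mulVec {x : Fin e.ainf → F2} (hx : e.B1 *ᵥ x = 0) :
    e.B1 *ᵥ (e.D1 *ᵥ x) = 0 := by
  have h := congrArg (· *ᵥ x) e.comm1
  simpa only [add_mulVec, ← mulVec_mulVec, hx, mulVec_zero, zero_mulVec, zero_add] using h

theorem D1_mulVec_D1_mulVec {x : Fin e.ainf → F2} (hx : e.B1 *ᵥ x = 0) :
    e.D1 *ᵥ (e.D1 *ᵥ x) = x := by
  have hCB : e.C1 * e.B1 + e.D1 * e.D1 = 1 := by
    have h := e.inv1_left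
    rw [← fromBlocks_one, fromBlocks_multiply, fromBlocks_inj] at h
    exact h.2.2.2
  have h := congrArg (· *ᵥ x) hCB
  simpa only [add_mulVec, ← mulVec_mulVec, hx, mulVec_zero, zero_add, one_mulVec] using h

theorem finfM_mulVec (x : Fin e.ainf → F2) (w : Fin e.a1 → F2) :
    e.finfM *ᵥ Sum.elim x w = Sum.elim (0 : Fin e.a0 → F2) x := by
  simp [finfM, fromBlocks_mulVec]

theorem fbarinfM_mulVec (x : Fin e.ainf → F2) (w : Fin e.a1 → F2) :
    e.fbarinfM *ᵥ Sum.elim x w =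
      Sum.elim (e.B1 *ᵥ (e.A0 *ᵥ x + e.B0 *ᵥ w)) (e.D1 *ᵥ (e.A0 *ᵥ x + e.B0 *ᵥ w)) := by
  rw [fbarinfM, ← mulVec_mulVec, ← mulVec_mulVec, tau0, fromBlocks_mulVec, Sum.elim_comp_inl,
    Sum.elim_comp_inr, finfM_mulVec, tau1inv, fromBlocks_mulVec, Sum.elim_comp_inl,
    Sum.elim_comp_inr, mulVec_zero, mulVec_zero, zero_add, zero_add]

theorem sumElim_mem_ker_finfM_inf_ker_fbarinfM {x : Fin e.ainf → F2} {w : Fin e.a1 → F2} :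
    Sum.elim x w ∈ LinearMap.ker e.finfM.mulVecLin ⊓ LinearMap.ker e.fbarinfM.mulVecLin ↔
      x = 0 ∧ e.B0 *ᵥ w = 0 := by
  simp only [Submodule.mem_inf, LinearMap.mem_ker, mulVecLin_apply, finfM_mulVec, fbarinfM_mulVec,
    ← Sum.elim_zero_zero, Sum.elim_eq_iff, true_and]
  refine and_congr_right fun hx => ?_
  rw [hx, mulVec_zero, zero_add]
  refine ⟨fun ⟨hB, hD⟩ => ?_, fun hw => by simp only [hw, mulVec_zero, and_self]⟩
  rw [← D1_mulVec_D1_mulVec hB, hD, mulVec_zero]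

theorem sumElim_mem_ker_finfM_add_fbarinfM {x : Fin e.ainf → F2} {w : Fin e.a1 → F2} :
    Sum.elim x w ∈ LinearMap.ker (e.finfM + e.fbarinfM).mulVecLin ↔
      e.B1 *ᵥ (e.A0 *ᵥ x + e.B0 *ᵥ w) = 0 ∧ e.D1 *ᵥ (e.A0 *ᵥ x + e.B0 *ᵥ w) = x := by
  rw [LinearMap.mem_ker, mulVecLin_apply, add_mulVec, finfM_mulVec, fbarinfM_mulVec,
    ← Sum.elim_add_add, ← Sum.elim_zero_zero, Sum.elim_eq_iff, zero_add,
    ← ZModModule.sub_eq_add x, sub_eq_zero, eq_comm (a := x)]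

variable (e)

theorem kinf_eq_finrank_ker_B0 : e.kinf = finrank F2 (LinearMap.ker e.B0.mulVecLin) := by
  let K := LinearMap.ker e.finfM.mulVecLin ⊓ LinearMap.ker e.fbarinfM.mulVecLin
  let snd : (Fin e.ainf ⊕ Fin e.a1 → F2) →ₗ[F2] (Fin e.a1 → F2) := .funLeft F2 F2 Sum.inr
  have hmap : K.map snd = LinearMap.ker e.B0.mulVecLin := by
    ext w
    constructor
    · rintro ⟨v, hv, rfl⟩
      rw [← Sum.elim_comp_inl_inr v] at hv
      exact (sumElim_mem_ker_finfM_inf_ker_fbarinfM.1 hv).2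
    · exact fun hw => ⟨Sum.elim 0 w, sumElim_mem_ker_finfM_inf_ker_fbarinfM.2 ⟨rfl, hw⟩, rfl⟩
  have hker : K ⊓ LinearMap.ker snd = ⊥ := by
    refine (Submodule.eq_bot_iff _).2 fun v ⟨hv, hv0⟩ => ?_
    have hinr : v ∘ Sum.inr = 0 := hv0
    rw [← Sum.elim_comp_inl_inr v] at hv ⊢
    rw [(sumElim_mem_ker_finfM_inf_ker_fbarinfM.1 hv).1, hinr, Sum.elim_zero_zero]
  rw [← hmap, kinf, ← finrank_map_add_finrank_inf_ker snd K, hker, finrank_bot, add_zero]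

/-- The projection of `ker (finf + fbarinf)` to its first block `F^ainf`, a space of dimension
`linf`. -/
def Linf : Submodule F2 (Fin e.ainf → F2) :=
  (LinearMap.ker (e.finfM + e.fbarinfM).mulVecLin).map (LinearMap.funLeft F2 F2 Sum.inl)

/-- The analogue of `Linf` for `f0`, a space of dimension `l0`. -/
def L0 : Submodule F2 (Fin e.a0 → F2) := e.rotate.Linf

/-- The analogue of `Linf` for `f1`, a space of dimension `l1`. -/
def L1 : Submodule F2 (Fin e.a1 → F2) := e.rotate.rotate.Linf

theorem linf_eq_finrank_Linf : e.linf = finrank F2 e.Linf := by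
  let S := LinearMap.ker (e.finfM + e.fbarinfM).mulVecLin
  let fst : (Fin e.ainf ⊕ Fin e.a1 → F2) →ₗ[F2] (Fin e.ainf → F2) := .funLeft F2 F2 Sum.inl
  have hfst : LinearMap.ker fst = LinearMap.ker e.finfM.mulVecLin := by
    ext v
    rw [← Sum.elim_comp_inl_inr v, LinearMap.mem_ker, LinearMap.mem_ker, mulVecLin_apply,
      finfM_mulVec, ← Sum.elim_zero_zero, Sum.elim_eq_iff]
    exact (and_iff_right rfl).symm
  have hker : S ⊓ LinearMap.ker fst =
      LinearMap.ker e.finfM.mulVecLin ⊓ LinearMap.ker e.fbarinfM.mulVecLin := by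
    rw [hfst, inf_comm]
    ext v
    simp only [S, Submodule.mem_inf, LinearMap.mem_ker, mulVecLin_add, LinearMap.add_apply]
    exact and_congr_right fun hv => by rw [hv, zero_add]
  have hS := finrank_map_add_finrank_inf_ker fst S
  rw [hker] at hS
  exact (Nat.eq_sub_of_add_eq hS).symm

theorem k0_eq_finrank_ker_B1 : e.k0 = finrank F2 (LinearMap.ker e.B1.mulVecLin) :=
  e.rotate.kinf_eq_finrank_ker_B0

theorem k1_eq_finrank_ker_Binf : e.k1 = finrank F2 (LinearMap.ker e.Binf.mulVecLin) :=
  e.rotate.rotate.kinf_eq_finrank_ker_B0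

theorem l0_eq_finrank_L0 : e.l0 = finrank F2 e.L0 :=
  e.rotate.linf_eq_finrank_Linf

theorem l1_eq_finrank_L1 : e.l1 = finrank F2 e.L1 :=
  e.rotate.rotate.linf_eq_finrank_Linf

variable {e}

theorem mem_Linf {x : Fin e.ainf → F2} :
    x ∈ e.Linf ↔ ∃ w, e.B1 *ᵥ (e.A0 *ᵥ x + e.B0 *ᵥ w) = 0 ∧
      e.D1 *ᵥ (e.A0 *ᵥ x + e.B0 *ᵥ w) = x := by
  constructor
  · rintro ⟨v, hv, rfl⟩
    rw [← Sum.elim_comp_inl_inr v] at hv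
    exact ⟨_, sumElim_mem_ker_finfM_add_fbarinfM.1 hv⟩
  · exact fun ⟨w, hw⟩ => ⟨Sum.elim x w, sumElim_mem_ker_finfM_add_fbarinfM.2 hw, rfl⟩

theorem mem_L0 {x : Fin e.a0 → F2} :
    x ∈ e.L0 ↔ ∃ w, e.Binf *ᵥ (e.A1 *ᵥ x + e.B1 *ᵥ w) = 0 ∧
      e.Dinf *ᵥ (e.A1 *ᵥ x + e.B1 *ᵥ w) = x :=
  mem_Linf (e := e.rotate)

theorem mem_L1 {x : Fin e.a1 → F2} :
    x ∈ e.L1 ↔ ∃ w, e.B0 *ᵥ (e.Ainf *ᵥ x + e.Binf *ᵥ w) = 0 ∧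
      e.D0 *ᵥ (e.Ainf *ᵥ x + e.Binf *ᵥ w) = x :=
  mem_Linf (e := e.rotate.rotate)

theorem B1_mulVec_eq_zero_of_mem_Linf {x : Fin e.ainf → F2} (hx : x ∈ e.Linf) :
    e.B1 *ᵥ x = 0 := by
  obtain ⟨w, hB, hD⟩ := mem_Linf.1 hx
  rw [← hD, B1_mulVec_D1_mulVec hB]

theorem Binf_mulVec_eq_zero_of_mem_L0 {x : Fin e.a0 → F2} (hx : x ∈ e.L0) :
    e.Binf *ᵥ x = 0 :=
  B1_mulVec_eq_zero_of_mem_Linf (e := e.rotate) hx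

theorem B0_mulVec_eq_zero_of_mem_L1 {x : Fin e.a1 → F2} (hx : x ∈ e.L1) :
    e.B0 *ᵥ x = 0 :=
  B1_mulVec_eq_zero_of_mem_Linf (e := e.rotate.rotate) hx

end Datum

section Splice

variable {e1 e2 : SplicingDatum}

/-- The vector in the source of `spliceD` with the given blocks, in the order of the summands. -/
def blockVec (u1 : Fin e1.ainf × Fin e2.ainf → F2) (u2 : Fin e1.ainf × Fin e2.a0 → F2)
    (u3 : Fin e1.a1 × Fin e2.a0 → F2) (u4 : Fin e1.a0 × Fin e2.ainf → F2)
    (u5 : Fin e1.a0 × Fin e2.a1 → F2) (u6 : Fin e1.a1 × Fin e2.a1 → F2) : Src e1 e2 → F2 :=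
  Sum.elim u1 <| Sum.elim u2 <| Sum.elim u3 <| Sum.elim u4 <| Sum.elim u5 u6

theorem mem_ker_spliceD {v : Src e1 e2 → F2} :
    v ∈ LinearMap.ker (spliceD e1 e2).mulVecLin ↔
      row1 e1 e2 *ᵥ v = 0 ∧ row2 e1 e2 *ᵥ v = 0 ∧ row3 e1 e2 *ᵥ v = 0 ∧
        row4 e1 e2 *ᵥ v = 0 ∧ row5 e1 e2 *ᵥ v = 0 ∧ row6 e1 e2 *ᵥ v = 0 := by
  simp only [LinearMap.mem_ker, mulVecLin_apply, spliceD, fromRows_mulVec, ← Sum.elim_zero_zero,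
    Sum.elim_eq_iff]

theorem blockVec_mem_ker_of_ker_B1_ker_B1 {x : Fin e1.ainf → F2} {y : Fin e2.ainf → F2}
    (hx : e1.B1 *ᵥ x = 0) (hy : e2.B1 *ᵥ y = 0) :
    blockVec (tensVec x y) 0 0 0 0 0 ∈ LinearMap.ker (spliceD e1 e2).mulVecLin := by
  rw [mem_ker_spliceD]
  simp only [blockVec, row1, row2, row3, row4, row5, row6, fromCols_mulVec_sumElim,
    kronecker_mulVec_tensVec, ← mulVec_mulVec, hx, hy, mulVec_zero, zero_mulVec,
    tensVec_zero_left, tensVec_zero_right, add_zero, and_self]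

theorem blockVec_mem_ker_of_ker_B0_ker_Binf {x : Fin e1.a1 → F2} {y : Fin e2.a0 → F2}
    (hx : e1.B0 *ᵥ x = 0) (hy : e2.Binf *ᵥ y = 0) :
    blockVec 0 0 (tensVec x y) 0 0 0 ∈ LinearMap.ker (spliceD e1 e2).mulVecLin := by
  rw [mem_ker_spliceD]
  simp only [blockVec, row1, row2, row3, row4, row5, row6, fromCols_mulVec_sumElim,
    kronecker_mulVec_tensVec, ← mulVec_mulVec, hx, hy, mulVec_zero, zero_mulVec,
    tensVec_zero_left, tensVec_zero_right, add_zero, and_self]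

theorem blockVec_mem_ker_of_ker_Binf_ker_B0 {x : Fin e1.a0 → F2} {y : Fin e2.a1 → F2}
    (hx : e1.Binf *ᵥ x = 0) (hy : e2.B0 *ᵥ y = 0) :
    blockVec 0 0 0 0 (tensVec x y) 0 ∈ LinearMap.ker (spliceD e1 e2).mulVecLin := by
  rw [mem_ker_spliceD]
  simp only [blockVec, row1, row2, row3, row4, row5, row6, fromCols_mulVec_sumElim, add_mulVec,
    kronecker_mulVec_tensVec, ← mulVec_mulVec, hx, hy, mulVec_zero, zero_mulVec,
    tensVec_zero_left, tensVec_zero_right, add_zero, and_self]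

theorem exists_blockVec_mem_ker_of_mem_Linf_of_mem_L0 {x : Fin e1.ainf → F2}
    {y : Fin e2.a0 → F2} (hx : x ∈ e1.Linf) (hy : y ∈ e2.L0) :
    ∃ u1 u3, blockVec u1 (tensVec x y) u3 0 0 0 ∈ LinearMap.ker (spliceD e1 e2).mulVecLin := by
  have hBx := B1_mulVec_eq_zero_of_mem_Linf hx
  have hBy := Binf_mulVec_eq_zero_of_mem_L0 hy
  obtain ⟨w, hBw, hDw⟩ := mem_Linf.1 hx
  obtain ⟨v, hBv, hDv⟩ := mem_L0.1 hy
  rw [add_comm] at hBv hDv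
  refine ⟨tensVec x v, tensVec w y, ?_⟩
  rw [mem_ker_spliceD]
  simp only [blockVec, row1, row2, row3, row4, row5, row6, fromCols_mulVec_sumElim, add_mulVec,
    kronecker_mulVec_tensVec, ← mulVec_mulVec, one_mulVec, hBx, hBy, mulVec_zero, zero_mulVec,
    tensVec_zero_left, tensVec_zero_right, add_zero, zero_add, and_true]
  refine ⟨?row1, ?row2, ?row3⟩
  case row1 => rw [← tensVec_add_left, ← mulVec_add, hBw, tensVec_zero_left]
  case row2 =>
    rw [← tensVec_add_left, ← mulVec_add, hDw, ← tensVec_add_right, ← mulVec_add, hBv,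
      tensVec_zero_right]
  case row3 =>
    rw [add_assoc, ← tensVec_add_left, ← mulVec_add, hDw, add_left_comm, ← tensVec_add_right,
      ← mulVec_add, hDv, ZModModule.add_self]

theorem exists_blockVec_mem_ker_of_mem_L0_of_mem_Linf {x : Fin e1.a0 → F2}
    {y : Fin e2.ainf → F2} (hx : x ∈ e1.L0) (hy : y ∈ e2.Linf) :
    ∃ u1 u5, blockVec u1 0 0 (tensVec x y) u5 0 ∈ LinearMap.ker (spliceD e1 e2).mulVecLin := by
  have hBx := Binf_mulVec_eq_zero_of_mem_L0 hx
  have hBy := B1_mulVec_eq_zero_of_mem_Linf hy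
  obtain ⟨w, hBw, hDw⟩ := mem_L0.1 hx
  obtain ⟨v, hBv, hDv⟩ := mem_Linf.1 hy
  rw [add_comm] at hBw hDw
  refine ⟨tensVec w y, tensVec x v, ?_⟩
  rw [mem_ker_spliceD]
  simp only [blockVec, row1, row2, row3, row4, row5, row6, fromCols_mulVec_sumElim, add_mulVec,
    kronecker_mulVec_tensVec, ← mulVec_mulVec, one_mulVec, hBx, hBy, mulVec_zero, zero_mulVec,
    tensVec_zero_left, tensVec_zero_right, add_zero, zero_add, and_true, true_and]
  refine ⟨?row1, ?row4, ?row5⟩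
  case row1 =>
    rw [← add_assoc, ← tensVec_add_left, ← mulVec_add, hDw, ← tensVec_add_right, ← mulVec_add,
      hBv, tensVec_zero_right]
  case row4 => rw [← tensVec_add_left, ← mulVec_add, hBw, tensVec_zero_left]
  case row5 =>
    rw [add_assoc, add_left_comm, ← add_assoc (tensVec _ _) (tensVec _ _) (tensVec x _),
      ← tensVec_add_left, ← mulVec_add, hDw, ← tensVec_add_right, ← mulVec_add, hDv,
      ZModModule.add_self]

theorem exists_blockVec_mem_ker_of_mem_L1_of_mem_L1 {x : Fin e1.a1 → F2}
    {y : Fin e2.a1 → F2} (hx : x ∈ e1.L1) (hy : y ∈ e2.L1) :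
    ∃ u3 u5, blockVec 0 0 u3 0 u5 (tensVec x y) ∈ LinearMap.ker (spliceD e1 e2).mulVecLin := by
  have hBx := B0_mulVec_eq_zero_of_mem_L1 hx
  have hBy := B0_mulVec_eq_zero_of_mem_L1 hy
  obtain ⟨w, hBw, hDw⟩ := mem_L1.1 hx
  obtain ⟨v, hBv, hDv⟩ := mem_L1.1 hy
  rw [add_comm] at hBw hDw hBv hDv
  refine ⟨tensVec x v, tensVec w y, ?_⟩
  rw [mem_ker_spliceD]
  simp only [blockVec, row1, row2, row3, row4, row5, row6, X1M, fromCols_mulVec_sumElim,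
    add_mulVec, kronecker_mulVec_tensVec, ← mulVec_mulVec, one_mulVec, hBx, hBy, mulVec_zero,
    zero_mulVec, tensVec_zero_left, tensVec_zero_right, add_zero, zero_add, true_and]
  refine ⟨?row2, ?row4, ?row6⟩
  case row2 => rw [← tensVec_add_left, ← mulVec_add, hBw, tensVec_zero_left]
  case row4 =>
    rw [← tensVec_add_left, ← mulVec_add, hDw, ← tensVec_add_right, ← mulVec_add, hBv,
      tensVec_zero_right]
  case row6 =>
    rw [add_left_comm (tensVec (e1.D0 *ᵥ _) _), ← tensVec_add_left, ← mulVec_add, hDw,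
      add_left_comm, ← tensVec_add_right, ← mulVec_add, hDv, ZModModule.add_self]

/-- The inclusion of the first, third and fifth summands in the source of `spliceD`. -/
def oddInclusion (e1 e2 : SplicingDatum) :
    ((Fin e1.ainf × Fin e2.ainf → F2) × (Fin e1.a1 × Fin e2.a0 → F2) ×
      (Fin e1.a0 × Fin e2.a1 → F2)) →ₗ[F2] (Src e1 e2 → F2) where
  toFun u := blockVec u.1 0 u.2.1 0 u.2.2 0
  map_add' u u' := by simp only [blockVec, Prod.fst_add, Prod.snd_add, ← Sum.elim_add_add, add_zero]
  map_smul' c u := by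
    ext (_ | _ | _ | _ | _ | _) <;> simp [blockVec]

/-- The projection of the source of `spliceD` to its second, fourth and sixth summands. -/
def evenProjection (e1 e2 : SplicingDatum) :
    (Src e1 e2 → F2) →ₗ[F2] ((Fin e1.ainf × Fin e2.a0 → F2) × (Fin e1.a0 × Fin e2.ainf → F2) ×
      (Fin e1.a1 × Fin e2.a1 → F2)) :=
  (LinearMap.funLeft F2 F2 (.inr ∘ .inl)).prod <|
    (LinearMap.funLeft F2 F2 (.inr ∘ .inr ∘ .inr ∘ .inl)).prod
      (LinearMap.funLeft F2 F2 (.inr ∘ .inr ∘ .inr ∘ .inr ∘ .inr))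

theorem oddInclusion_injective : Function.Injective (oddInclusion e1 e2) := by
  rintro ⟨u1, u3, u5⟩ ⟨u1', u3', u5'⟩ h
  simp only [oddInclusion, LinearMap.coe_mk, AddHom.coe_mk, blockVec, Sum.elim_eq_iff] at h
  obtain ⟨h1, -, h3, -, h5, -⟩ := h
  rw [h1, h3, h5]

theorem evenProjection_blockVec (u1 : Fin e1.ainf × Fin e2.ainf → F2)
    (u2 : Fin e1.ainf × Fin e2.a0 → F2) (u3 : Fin e1.a1 × Fin e2.a0 → F2)
    (u4 : Fin e1.a0 × Fin e2.ainf → F2) (u5 : Fin e1.a0 × Fin e2.a1 → F2)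
    (u6 : Fin e1.a1 × Fin e2.a1 → F2) :
    evenProjection e1 e2 (blockVec u1 u2 u3 u4 u5 u6) = (u2, u4, u6) :=
  rfl

theorem evenProjection_comp_oddInclusion : evenProjection e1 e2 ∘ₗ oddInclusion e1 e2 = 0 :=
  rfl

variable (e1 e2)

/-- `ker B1 ⊗ ker B1 ⊕ ker B0 ⊗ ker Binf ⊕ ker Binf ⊗ ker B0`, in the odd summands of the source of
`spliceD`. -/
def oddTensors : Submodule F2 ((Fin e1.ainf × Fin e2.ainf → F2) ×
    (Fin e1.a1 × Fin e2.a0 → F2) × (Fin e1.a0 × Fin e2.a1 → F2)) :=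
  (Submodule.map₂ tensBilin (LinearMap.ker e1.B1.mulVecLin) (LinearMap.ker e2.B1.mulVecLin)).prod <|
    (Submodule.map₂ tensBilin
      (LinearMap.ker e1.B0.mulVecLin) (LinearMap.ker e2.Binf.mulVecLin)).prod
    (Submodule.map₂ tensBilin (LinearMap.ker e1.Binf.mulVecLin) (LinearMap.ker e2.B0.mulVecLin))

/-- `Linf ⊗ L0 ⊕ L0 ⊗ Linf ⊕ L1 ⊗ L1`, in the even summands of the source of `spliceD`. -/
def evenTensors : Submodule F2 ((Fin e1.ainf × Fin e2.a0 → F2) ×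
    (Fin e1.a0 × Fin e2.ainf → F2) × (Fin e1.a1 × Fin e2.a1 → F2)) :=
  (Submodule.map₂ tensBilin e1.Linf e2.L0).prod <|
    (Submodule.map₂ tensBilin e1.L0 e2.Linf).prod (Submodule.map₂ tensBilin e1.L1 e2.L1)

theorem finrank_oddTensors :
    finrank F2 (oddTensors e1 e2) = e1.k0 * e2.k0 + (e1.kinf * e2.k1 + e1.k1 * e2.kinf) := by
  rw [oddTensors, finrank_submodule_prod, finrank_submodule_prod, finrank_map₂_tensBilin,
    finrank_map₂_tensBilin, finrank_map₂_tensBilin]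
  simp only [k0_eq_finrank_ker_B1, k1_eq_finrank_ker_Binf, kinf_eq_finrank_ker_B0]

theorem finrank_evenTensors :
    finrank F2 (evenTensors e1 e2) = e1.linf * e2.l0 + (e1.l0 * e2.linf + e1.l1 * e2.l1) := by
  rw [evenTensors, finrank_submodule_prod, finrank_submodule_prod, finrank_map₂_tensBilin,
    finrank_map₂_tensBilin, finrank_map₂_tensBilin]
  simp only [linf_eq_finrank_Linf, l0_eq_finrank_L0, l1_eq_finrank_L1]

theorem oddTensors_le_comap_oddInclusion :
    oddTensors e1 e2 ≤
      (LinearMap.ker (spliceD e1 e2).mulVecLin).comap (oddInclusion e1 e2) := by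
  rw [oddTensors, Submodule.prod_le_iff, Submodule.map_le_iff_le_comap (f := .inr ..),
    Submodule.prod_le_iff]
  simp only [Submodule.map_le_iff_le_comap, Submodule.map₂_le]
  exact ⟨fun x hx y hy => blockVec_mem_ker_of_ker_B1_ker_B1 hx hy,
    fun x hx y hy => blockVec_mem_ker_of_ker_B0_ker_Binf hx hy,
    fun x hx y hy => blockVec_mem_ker_of_ker_Binf_ker_B0 hx hy⟩

theorem evenTensors_le_map_evenProjection :
    evenTensors e1 e2 ≤
      (LinearMap.ker (spliceD e1 e2).mulVecLin).map (evenProjection e1 e2) := by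
  rw [evenTensors, Submodule.prod_le_iff, Submodule.map_le_iff_le_comap (f := .inr ..),
    Submodule.prod_le_iff]
  simp only [Submodule.map_le_iff_le_comap, Submodule.map₂_le]
  refine ⟨fun x hx y hy => ?_, fun x hx y hy => ?_, fun x hx y hy => ?_⟩
  · obtain ⟨u1, u3, hu⟩ := exists_blockVec_mem_ker_of_mem_Linf_of_mem_L0 hx hy
    exact ⟨_, hu, evenProjection_blockVec ..⟩
  · obtain ⟨u1, u5, hu⟩ := exists_blockVec_mem_ker_of_mem_L0_of_mem_Linf hx hy
    exact ⟨_, hu, evenProjection_blockVec ..⟩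
  · obtain ⟨u3, u5, hu⟩ := exists_blockVec_mem_ker_of_mem_L1_of_mem_L1 hx hy
    exact ⟨_, hu, evenProjection_blockVec ..⟩

end Splice

end SplicingDatum

open SplicingDatum in
/-- lower bound for the dimension of the kernel of the splicing map `D`. -/
theorem stmt5 (e1 e2 : SplicingDatum) :
    kdim (spliceD e1 e2) ≥
      e1.k0 * e2.k0 + e1.kinf * e2.k1 + e1.k1 * e2.kinf +
        e1.linf * e2.l0 + e1.l0 * e2.linf + e1.l1 * e2.l1 := by
  have hdim : finrank F2 (oddTensors e1 e2) + finrank F2 (evenTensors e1 e2) ≤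
      kdim (spliceD e1 e2) :=
    finrank_add_finrank_le_of_comp_eq_zero oddInclusion_injective evenProjection_comp_oddInclusion
      (oddTensors_le_comap_oddInclusion e1 e2) (evenTensors_le_map_evenProjection e1 e2)
  rw [finrank_oddTensors, finrank_evenTensors] at hdim
  linarith
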